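/- Let λ > 0 and let Q : (0,1) → ℝ be the quantile function of the skew normal distribution SN(λ). Then, as u → 0⁺, |λ·Q(u)|·Φ(λ·Q(u)) ~ (1/√(2π))·(2πλ)^{λ²/(1+λ²)}·u^{λ²/(1+λ²)}·(-log u)^{λ²/(1+λ²)}, where f ~ g means f/g → 1. -/

import Mathlib

/-!
Put `x = Q u`, so that `u = F x` with `F = snCDF l`. Since `F` is positive and monotone, `x → -∞` as
`u → 0⁺`, and it suffices to compare tails at `-∞`.

One application of l'Hôpital's rule (`tendsto_gaussian_tail`) shows that a function equivalent to
`K e^{-cx²/2} / |x|^k` has an integral over `(-∞, x]` equivalent to `(K / c) e^{-cx²/2} / |x|^{k+1}`.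
Applied to the normal density it gives the Mills ratio `|x| Φ(x) ~ φ(x)` (`tendsto_stdNormalCDF`);
the skew normal density is then equivalent to `e^{-(1+l²)x²/2} / (π l |x|)`, and a second
application gives `F x ~ e^{-(1+l²)x²/2} / (π l (1+l²) x²)` (`tendsto_snCDF`). Taking logarithms,
`-log (F x) ~ (1+l²) x² / 2`, so the powers of `x` cancel in the product:
`2 π l · F x · (-log (F x)) ~ e^{-(1+l²)x²/2}` (`tendsto_snCDF_mul_log`). Raising this to the power
`l² / (1+l²)` produces `e^{-(lx)²/2} = √(2π) φ(lx)`, which by the Mills ratio is equivalent to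
`√(2π) |lx| Φ(lx)`.
-/

open Real Filter Topology MeasureTheory

/-- The standard normal cumulative distribution function. -/
noncomputable def stdNormalCDF (x : ℝ) : ℝ :=
  ∫ t in Set.Iic x, (Real.sqrt (2 * Real.pi))⁻¹ * Real.exp (-(t ^ 2) / 2)

/-- The cdf of the skew normal distribution `SN(l)`. -/
noncomputable def snCDF (l : ℝ) (x : ℝ) : ℝ :=
  ∫ t in Set.Iic x,
    2 * ((Real.sqrt (2 * Real.pi))⁻¹ * Real.exp (-(t ^ 2) / 2)) * stdNormalCDF (l * t)

lemma hasDerivAt_setIntegral_Iic {h : ℝ → ℝ} (hi : Integrable h) (hc : Continuous h) (x : ℝ) :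
    HasDerivAt (fun x => ∫ t in Set.Iic x, h t) (h x) x := by
  have h1 : (fun x => ∫ t in Set.Iic x, h t) =
      fun x => (∫ t in Set.Iic (0 : ℝ), h t) + ∫ t in (0 : ℝ)..x, h t := by
    funext y
    rw [← intervalIntegral.integral_Iic_sub_Iic hi.integrableOn hi.integrableOn]
    ring
  rw [h1]
  exact (hc.integral_hasStrictDerivAt 0 x).hasDerivAt.const_add _

lemma tendsto_setIntegral_Iic_atBot {h : ℝ → ℝ} (hi : Integrable h) :
    Tendsto (fun x => ∫ t in Set.Iic x, h t) atBot (𝓝 0) := by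
  have h1 := tendsto_setIntegral_of_antitone (μ := volume) (f := h)
    (s := fun i : ℝ => Set.Iic (-i)) (fun i => measurableSet_Iic)
    (fun a b hab => Set.Iic_subset_Iic.2 (neg_le_neg hab)) ⟨0, hi.integrableOn⟩
  have h2 : (⋂ n : ℝ, Set.Iic (-n)) = ∅ := by
    ext y
    simp only [Set.mem_iInter, Set.mem_Iic, Set.mem_empty_iff_false, iff_false, not_forall, not_le]
    exact ⟨1 - y, by linarith⟩
  rw [h2, setIntegral_empty] at h1
  simpa [Function.comp_def] using h1.comp tendsto_neg_atBot_atTop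

lemma tendsto_exp_neg_mul_sq_atBot {c : ℝ} (hc : 0 < c) :
    Tendsto (fun x : ℝ => exp (-(c * x ^ 2 / 2))) atBot (𝓝 0) := by
  refine tendsto_exp_neg_atTop_nhds_zero.comp ?_
  refine Tendsto.atTop_div_const two_pos (Tendsto.const_mul_atTop hc ?_)
  simpa [Function.comp_def] using (tendsto_pow_atTop (α := ℝ) two_ne_zero).comp tendsto_neg_atBot_atTop

/-- Laplace-type tail asymptotics: integrating a function equivalent to
`K e^{-cx²/2} / |x|^k` at `-∞` divides it by `c|x|`. This is one application of l'Hôpital's rule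
against `e^{-cx²/2} / |x|^{k+1}`. -/
lemma tendsto_gaussian_tail {h : ℝ → ℝ} (hi : Integrable h) (hcont : Continuous h) {c K : ℝ}
    (hc : 0 < c) (k : ℕ)
    (hK : Tendsto (fun x => h x * (-x) ^ k * exp (c * x ^ 2 / 2)) atBot (𝓝 K)) :
    Tendsto (fun x => (∫ t in Set.Iic x, h t) * (-x) ^ (k + 1) * exp (c * x ^ 2 / 2)) atBot
      (𝓝 (K / c)) := by
  have hsq : Tendsto (fun x : ℝ => ((k : ℝ) + 1) / x ^ 2) atBot (𝓝 0) := by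
    refine Tendsto.div_atTop tendsto_const_nhds ?_
    simpa [Function.comp_def] using
      (tendsto_pow_atTop (α := ℝ) two_ne_zero).comp tendsto_neg_atBot_atTop
  have key := HasDerivAt.lhopital_zero_atBot (f := fun x => ∫ t in Set.Iic x, h t) (f' := h)
    (g := fun x => exp (-(c * x ^ 2 / 2)) * ((-x) ^ (k + 1))⁻¹)
    (g' := fun x => exp (-(c * x ^ 2 / 2)) * ((-x) ^ k)⁻¹ * (c + ((k : ℝ) + 1) / x ^ 2))
    (l := 𝓝 (K / c))
    (Eventually.of_forall fun x => hasDerivAt_setIntegral_Iic hi hcont x) ?_ ?_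
    (tendsto_setIntegral_Iic_atBot hi) ?_ ?_
  · refine key.congr' ?_
    filter_upwards [eventually_lt_atBot 0] with x hx
    rw [exp_neg]
    field_simp
  · filter_upwards [eventually_lt_atBot 0] with x hx
    have hx' : -x ≠ 0 := by linarith
    have hx0 : x ≠ 0 := hx.ne
    have d1 : HasDerivAt (fun x : ℝ => exp (-(c * x ^ 2 / 2)))
        (exp (-(c * x ^ 2 / 2)) * (-(c * x))) x := by
      refine HasDerivAt.exp ?_
      refine ((((hasDerivAt_pow 2 x).const_mul c).div_const 2).neg).congr_deriv ?_
      push_cast; ring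
    have d2 : HasDerivAt (fun x : ℝ => ((-x) ^ (k + 1))⁻¹)
        (-(((k : ℝ) + 1) * (-x) ^ k * (-1)) / ((-x) ^ (k + 1)) ^ 2) x := by
      refine HasDerivAt.inv ?_ (pow_ne_zero _ hx')
      refine ((hasDerivAt_neg x).pow (k + 1)).congr_deriv ?_
      simp
    refine (d1.mul d2).congr_deriv ?_
    have : x ^ 2 = (-x) ^ 2 := by ring
    rw [this]
    rw [show c * x = - (c * (-x)) by ring]
    generalize exp _ = E
    generalize -x = y at *
    field_simp
    ring
  · filter_upwards [eventually_lt_atBot 0] with x hx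
    have hx' : 0 < -x := by linarith
    have hx0 : 0 < x ^ 2 := sq_pos_of_neg hx
    positivity
  · have h0 : Tendsto (fun x : ℝ => ((-x) ^ (k + 1))⁻¹) atBot (𝓝 0) :=
      ((tendsto_pow_atTop k.succ_ne_zero).comp tendsto_neg_atBot_atTop).inv_tendsto_atTop
    simpa using (tendsto_exp_neg_mul_sq_atBot hc).mul h0
  · have h1 := hK.div (hsq.const_add c) (by simpa using hc.ne')
    rw [add_zero] at h1
    refine h1.congr' ?_
    filter_upwards [eventually_lt_atBot 0] with x hx
    have hx0 : 0 < x ^ 2 := sq_pos_of_neg hx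
    have : 0 < c + ((k : ℝ) + 1) / x ^ 2 := by positivity
    simp only [Pi.div_apply]
    rw [exp_neg]
    field_simp

lemma integrable_stdNormal :
    Integrable fun t : ℝ => (√(2 * π))⁻¹ * exp (-(t ^ 2) / 2) := by
  refine Integrable.const_mul ?_ _
  refine (integrable_exp_neg_mul_sq (b := 1 / 2) (by norm_num)).congr (ae_of_all _ fun t => ?_)
  show exp _ = exp _
  congr 1; ring

lemma continuous_stdNormal :
    Continuous fun t : ℝ => (√(2 * π))⁻¹ * exp (-(t ^ 2) / 2) := by fun_prop

lemma continuous_stdNormalCDF : Continuous stdNormalCDF :=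
  continuous_iff_continuousAt.2 fun x =>
    (hasDerivAt_setIntegral_Iic integrable_stdNormal continuous_stdNormal x).continuousAt

lemma stdNormalCDF_pos (x : ℝ) : 0 < stdNormalCDF x := by
  unfold stdNormalCDF
  rw [setIntegral_pos_iff_support_of_nonneg_ae (ae_of_all _ fun t => by simp; positivity)
    integrable_stdNormal.integrableOn]
  have : (Function.support fun t : ℝ => (√(2 * π))⁻¹ * exp (-(t ^ 2) / 2)) = Set.univ := by
    ext t
    simp only [Function.mem_support, Set.mem_univ, iff_true]
    positivity
  rw [this, Set.univ_inter]
  simp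

lemma stdNormalCDF_le (x : ℝ) :
    stdNormalCDF x ≤ ∫ t : ℝ, (√(2 * π))⁻¹ * exp (-(t ^ 2) / 2) :=
  setIntegral_le_integral integrable_stdNormal (ae_of_all _ fun t => by simp; positivity)

lemma continuous_snDensity (l : ℝ) : Continuous fun t : ℝ =>
    2 * ((√(2 * π))⁻¹ * exp (-(t ^ 2) / 2)) * stdNormalCDF (l * t) := by
  have := continuous_stdNormalCDF
  fun_prop

lemma snDensity_pos (l t : ℝ) :
    0 < 2 * ((√(2 * π))⁻¹ * exp (-(t ^ 2) / 2)) * stdNormalCDF (l * t) := by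
  have := stdNormalCDF_pos (l * t)
  positivity

lemma integrable_snDensity (l : ℝ) : Integrable fun t : ℝ =>
    2 * ((√(2 * π))⁻¹ * exp (-(t ^ 2) / 2)) * stdNormalCDF (l * t) := by
  refine (integrable_stdNormal.const_mul 2).mul_bdd
    (c := ∫ t : ℝ, (√(2 * π))⁻¹ * exp (-(t ^ 2) / 2)) ?_ (ae_of_all _ fun t => ?_)
  · exact (continuous_stdNormalCDF.comp (continuous_const_mul l)).aestronglyMeasurable
  · rw [Real.norm_of_nonneg (stdNormalCDF_pos _).le]
    exact stdNormalCDF_le _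

lemma snCDF_pos (l x : ℝ) : 0 < snCDF l x := by
  unfold snCDF
  rw [setIntegral_pos_iff_support_of_nonneg_ae (ae_of_all _ fun t => (snDensity_pos l t).le)
    (integrable_snDensity l).integrableOn]
  have : (Function.support fun t : ℝ =>
      2 * ((√(2 * π))⁻¹ * exp (-(t ^ 2) / 2)) * stdNormalCDF (l * t)) = Set.univ := by
    ext t
    simp only [Function.mem_support, Set.mem_univ, iff_true]
    exact (snDensity_pos l t).ne'
  rw [this, Set.univ_inter]
  simp

lemma snCDF_mono (l : ℝ) : Monotone (snCDF l) := fun _ _ hxy =>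
  setIntegral_mono_set (integrable_snDensity l).integrableOn
    (ae_of_all _ fun t => (snDensity_pos l t).le) (Set.Iic_subset_Iic.2 hxy).eventuallyLE

/-- Mills ratio: `|x| Φ(x) ~ φ(x)` as `x → -∞`. -/
lemma tendsto_stdNormalCDF :
    Tendsto (fun x => stdNormalCDF x * (-x) * exp (x ^ 2 / 2)) atBot (𝓝 (√(2 * π))⁻¹) := by
  have h := tendsto_gaussian_tail integrable_stdNormal continuous_stdNormal (c := 1)
    (K := (√(2 * π))⁻¹) one_pos 0 (tendsto_const_nhds.congr fun x => by
      rw [pow_zero, mul_one, mul_assoc, ← exp_add]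
      ring_nf
      simp)
  simpa [stdNormalCDF] using h

/-- The left tail of `SN(l)` for `l > 0`:
`F(x) ~ e^{-(1+l²)x²/2} / (π l (1+l²) x²)` as `x → -∞`. -/
lemma tendsto_snCDF {l : ℝ} (hl : 0 < l) :
    Tendsto (fun x => snCDF l x * x ^ 2 * exp ((1 + l ^ 2) * x ^ 2 / 2)) atBot
      (𝓝 (1 / (π * l) / (1 + l ^ 2))) := by
  have hlx : Tendsto (fun x : ℝ => l * x) atBot atBot := tendsto_id.const_mul_atBot hl
  have h1 : Tendsto (fun x : ℝ => 2 * ((√(2 * π))⁻¹ * exp (-(x ^ 2) / 2)) * stdNormalCDF (l * x)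
      * (-x) ^ 1 * exp ((1 + l ^ 2) * x ^ 2 / 2)) atBot (𝓝 (1 / (π * l))) := by
    have h2 := (tendsto_stdNormalCDF.comp hlx).const_mul (2 * (√(2 * π))⁻¹ / l)
    have h3 : 2 * (√(2 * π))⁻¹ / l * (√(2 * π))⁻¹ = 1 / (π * l) := by
      have : √(2 * π) * √(2 * π) = 2 * π := mul_self_sqrt (by positivity)
      field_simp
      nlinarith
    rw [h3] at h2
    refine h2.congr fun x => ?_
    have h4 : exp ((l * x) ^ 2 / 2) = exp (-(x ^ 2) / 2) * exp ((1 + l ^ 2) * x ^ 2 / 2) := by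
      rw [← exp_add]; ring_nf
    simp only [Function.comp_apply]
    rw [h4]
    field_simp
  have h := tendsto_gaussian_tail (integrable_snDensity l) (continuous_snDensity l)
    (by positivity : 0 < 1 + l ^ 2) 1 h1
  simpa [snCDF] using h

/-- Taking logarithms in the tail asymptotics: `-log F(x) ~ (1+l²)x²/2` as `x → -∞`. -/
lemma tendsto_log_snCDF {l : ℝ} (hl : 0 < l) :
    Tendsto (fun x => -log (snCDF l x) / x ^ 2) atBot (𝓝 ((1 + l ^ 2) / 2)) := by
  have hsq : Tendsto (fun x : ℝ => x ^ 2) atBot atTop := by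
    simpa [Function.comp_def] using
      (tendsto_pow_atTop (α := ℝ) two_ne_zero).comp tendsto_neg_atBot_atTop
  have h1 := ((tendsto_snCDF hl).log (by positivity)).div_atTop hsq
  have h2 : Tendsto (fun x : ℝ => log (x ^ 2) / x ^ 2) atBot (𝓝 0) :=
    (isLittleO_log_id_atTop.tendsto_div_nhds_zero).comp hsq
  have h3 := (h2.sub h1).const_add ((1 + l ^ 2) / 2)
  simp only [sub_zero, add_zero] at h3
  refine h3.congr' ?_
  filter_upwards [eventually_lt_atBot 0] with x hx
  have hF := (snCDF_pos l x).ne'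
  have hx1 : x ≠ 0 := hx.ne
  have hx0 : x ^ 2 ≠ 0 := pow_ne_zero _ hx1
  rw [log_mul (mul_ne_zero hF hx0) (exp_pos _).ne', log_mul hF hx0, log_exp]
  field_simp
  ring

/-- The factors `x²` in the asymptotics of `F` and `-log F` cancel, which leaves
`2πl · F(x) · (-log F(x)) ~ e^{-(1+l²)x²/2}` as `x → -∞`. -/
lemma tendsto_snCDF_mul_log {l : ℝ} (hl : 0 < l) :
    Tendsto (fun x => 2 * π * l * (snCDF l x * -log (snCDF l x)) *
      exp ((1 + l ^ 2) * x ^ 2 / 2)) atBot (𝓝 1) := by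
  have h := ((tendsto_snCDF hl).mul (tendsto_log_snCDF hl)).const_mul (2 * π * l)
  have h1 : 2 * π * l * (1 / (π * l) / (1 + l ^ 2) * ((1 + l ^ 2) / 2)) = 1 := by
    have := pi_pos
    field_simp
  rw [h1] at h
  refine h.congr' ?_
  filter_upwards [eventually_lt_atBot 0] with x hx
  have hx0 : x ≠ 0 := hx.ne
  field_simp

/-- Only positivity and monotonicity of `F` enter: `0 < u < F(M)` forces `Q(u) < M`. -/
lemma tendsto_quantile_atBot {l : ℝ} {Q : ℝ → ℝ}
    (hQ : ∀ u ∈ Set.Ioo (0 : ℝ) 1, snCDF l (Q u) = u) :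
    Tendsto Q (𝓝[>] (0 : ℝ)) atBot := by
  refine tendsto_atBot.2 fun M => ?_
  filter_upwards [Ioo_mem_nhdsGT (lt_min one_pos (snCDF_pos l M))] with u hu
  have h1 := hQ u ⟨hu.1, hu.2.trans_le (min_le_left _ _)⟩
  have h2 := hu.2.trans_le (min_le_right _ _)
  rw [← h1] at h2
  exact ((snCDF_mono l).reflect_lt h2).le

/-- Lemma 7 of the paper: for `l > 0`,
`|l·Q(u)|·Φ(l·Q(u)) ~ (1/√(2π))·(2πl)^{l²/(1+l²)}·u^{l²/(1+l²)}·(-log u)^{l²/(1+l²)}`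
as `u → 0⁺`. -/
theorem Phi_regular_variation (l : ℝ) (hl : 0 < l) (Q : ℝ → ℝ)
    (hQ : ∀ u ∈ Set.Ioo (0 : ℝ) 1, snCDF l (Q u) = u) :
    Tendsto (fun u =>
      (|l * Q u| * stdNormalCDF (l * Q u)) /
      ((1 / Real.sqrt (2 * Real.pi)) * (2 * Real.pi * l) ^ (l ^ 2 / (1 + l ^ 2)) *
        u ^ (l ^ 2 / (1 + l ^ 2)) * (-Real.log u) ^ (l ^ 2 / (1 + l ^ 2))))
      (𝓝[>] (0 : ℝ)) (𝓝 1) := by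
  set p := l ^ 2 / (1 + l ^ 2) with hp
  have hlx : Tendsto (fun x : ℝ => l * x) atBot atBot := tendsto_id.const_mul_atBot hl
  have hQt := tendsto_quantile_atBot hQ
  -- With `x = Q u`, the quotient in the goal is the Mills quotient at `lx` divided by
  -- `(2πl F(x) (-log F(x)) e^{(1+l²)x²/2})^p / √(2π)`.
  have h1 := (tendsto_stdNormalCDF.comp (hlx.comp hQt)).div
    ((((tendsto_snCDF_mul_log hl).comp hQt).rpow_const (p := p) (Or.inl one_ne_zero)).const_mul
      (√(2 * π))⁻¹) (by simp; positivity)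
  have h2 : (√(2 * π))⁻¹ / ((√(2 * π))⁻¹ * (1 : ℝ) ^ p) = 1 := by
    rw [one_rpow, mul_one, div_self (by positivity)]
  rw [h2] at h1
  refine h1.congr' ?_
  filter_upwards [Ioo_mem_nhdsGT one_pos, hQt.eventually (eventually_lt_atBot 0)] with u hu hneg
  have hu0 : 0 < u := hu.1
  have hlog : 0 < -log u := neg_pos.2 (log_neg hu.1 hu.2)
  have habs : |l * Q u| = -(l * Q u) := abs_of_neg (mul_neg_of_pos_of_neg hl hneg)
  -- The exponent `p` is the one that turns `e^{(1+l²)x²/2}` into `e^{(lx)²/2}`.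
  have hexp : exp ((1 + l ^ 2) * Q u ^ 2 / 2) ^ p = exp ((l * Q u) ^ 2 / 2) := by
    rw [← exp_mul, hp]
    congr 1
    field_simp
  simp only [Pi.div_apply, Function.comp_apply]
  rw [hQ u hu, mul_rpow (by positivity) (exp_pos _).le, hexp,
    mul_rpow (by positivity) (by positivity), mul_rpow hu0.le hlog.le, habs]
  have e1 := (rpow_pos_of_pos hu0 p).ne'
  have e2 := (rpow_pos_of_pos hlog p).ne'
  have e3 := (rpow_pos_of_pos (by positivity : 0 < 2 * π * l) p).ne'
  have e4 := (exp_pos ((l * Q u) ^ 2 / 2)).ne'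
  field_simp
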